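/- The set T^PL(I) of piecewise linear transitive maps is homotopy dense in cl T(I): there exists a continuous map H : cl T(I) × [0,1] → cl T(I) such that H(f,0) = f for every f ∈ cl T(I) and H(f,t) ∈ T^PL(I) for every f ∈ cl T(I) and every t ∈ (0,1]. -/

import Mathlib

/-!
The homotopy replaces `f` by a zigzag. For a mesh `τ > 0` let `zig f τ` interpolate linearly
between the nodes `iτ`, taking at even nodes the value `(min f) - 4τ` and at odd nodes the value
`(max f) + 4τ` (clipped to `[0,1]`), the extrema being over the points at distance at most `3τ` from
the node. Everything depends continuously on `(f, τ)`, and `zig f τ → f` as `τ → 0`; the homotopy is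
`H (f, t) = zig f (t / 4)`.

The closure hypothesis gives a transitive `h` with `d(f, h) < τ`. Call the intervals
`[iτ, (i+1)τ] ⊆ [0,1]` laps.

* Every piece of `g = zig f τ` has slope at least `4` in absolute value, so an interval that
  contains no lap contains at most one turning point and its image contains an interval twice
  as long. Hence some iterate of any nondegenerate interval contains a lap (`exists_lap`).
* If a lap lies within `3τ` of `y`, then its `g`-image contains the `4τ`-neighbourhood of `f y`, hence
  the `3τ`-neighbourhood of `h y`, which contains a lap again. By induction the image of a
  lap under `g^[n]` contains its image under `h^[n]` for all `n ≥ 1` (`shadow`).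

So `g` inherits transitivity from `h`, although `h` does not enter the construction of `g`.
-/

open unitInterval

/-- A continuous self-map of the unit interval is (topologically) transitive if for every pair
of nonempty open sets `U, V ⊆ I` there is a positive integer `n` with `U ∩ f⁻ⁿ(V) ≠ ∅`. -/
def IsTransitiveMap (f : C(I, I)) : Prop :=
  ∀ U V : Set I, IsOpen U → IsOpen V → U.Nonempty → V.Nonempty →
    ∃ n : ℕ, 0 < n ∧ (U ∩ (f : I → I)^[n] ⁻¹' V).Nonempty

/-- `T(I)`: the set of transitive maps in `C(I, I)`. -/
def TransSet : Set C(I, I) := {f | IsTransitiveMap f}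

/-- `f ∈ C(I, I)` is piecewise linear if there is a finite partition
`0 = x₀ < x₁ < ⋯ < x_k = 1` such that `f` is affine on each `[x_{i-1}, x_i]`. -/
def IsPiecewiseLinearMap (f : C(I, I)) : Prop :=
  ∃ (k : ℕ) (x : Fin (k + 1) → I), StrictMono x ∧ x 0 = 0 ∧ x (Fin.last k) = 1 ∧
    ∀ i : Fin k, ∃ c d : ℝ, ∀ y ∈ Set.Icc (x i.castSucc) (x i.succ),
      ((f y : ℝ)) = c * (y : ℝ) + d

/-- `T^PL(I)`: the set of piecewise linear transitive maps in `C(I, I)`. -/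
def TransPLSet : Set C(I, I) := {f | IsTransitiveMap f ∧ IsPiecewiseLinearMap f}

open Set Filter Topology

/-! ### The zigzag interpolation -/

/-- `f` extended to `ℝ`, constantly outside `[0,1]`. -/
noncomputable def extR (f : C(I, I)) (y : ℝ) : ℝ := f (projIcc 0 1 zero_le_one y)

/-- The maximum of `extR f` over `[c - 3τ, c + 3τ]`, parametrised over a fixed compact set. -/
noncomputable def winSup (f : C(I, I)) (c τ : ℝ) : ℝ :=
  sSup ((fun s : ℝ => extR f (c + s * τ)) '' Icc (-3) 3)

/-- The minimum of `extR f` over `[c - 3τ, c + 3τ]`. -/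
noncomputable def winInf (f : C(I, I)) (c τ : ℝ) : ℝ :=
  sInf ((fun s : ℝ => extR f (c + s * τ)) '' Icc (-3) 3)

/-- The value of the zigzag at the node `iτ`: low at even nodes, high at odd nodes,
clipped to `[0,1]`. -/
noncomputable def node (f : C(I, I)) (τ : ℝ) (i : ℕ) : ℝ :=
  if Even i then max 0 (winInf f (i * τ) τ - 4 * τ) else min 1 (winSup f (i * τ) τ + 4 * τ)

/-- The piecewise linear interpolation of the values `node f τ i` at the nodes `iτ`, written as a
sum of hat functions so that it is visibly continuous in `τ` as well. -/
noncomputable def zig (f : C(I, I)) (τ x : ℝ) : ℝ :=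
  ∑ᶠ i : ℕ, node f τ i * max 0 (1 - |x / τ - i|)

lemma continuous_extR : Continuous fun p : C(I, I) × ℝ => extR p.1 p.2 := by
  unfold extR
  have h2 : Continuous fun p : C(I, I) × ℝ => projIcc (0 : ℝ) 1 zero_le_one p.2 :=
    continuous_projIcc.comp continuous_snd
  have h : Continuous fun p : C(I, I) × ℝ => p.1 (projIcc 0 1 zero_le_one p.2) := by
    fun_prop
  exact continuous_subtype_val.comp h

lemma extR_nonneg (f : C(I, I)) (y : ℝ) : 0 ≤ extR f y := (f _).2.1

lemma extR_le_one (f : C(I, I)) (y : ℝ) : extR f y ≤ 1 := (f _).2.2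

lemma extR_coe (f : C(I, I)) (y : I) : extR f y = f y := by simp [extR]

lemma continuous_win_aux (i : ℕ) : Continuous
    (fun q : (C(I, I) × ℝ) × ℝ => extR q.1.1 (i * q.1.2 + q.2 * q.1.2)) :=
  continuous_extR.comp (by fun_prop : Continuous fun q : (C(I, I) × ℝ) × ℝ =>
    (q.1.1, (i * q.1.2 + q.2 * q.1.2 : ℝ)))

lemma continuous_node (i : ℕ) : Continuous fun p : C(I, I) × ℝ => node p.1 p.2 i := by
  unfold node
  have h1 : Continuous fun p : C(I, I) × ℝ => winSup p.1 (i * p.2) p.2 :=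
    isCompact_Icc.continuous_sSup (f := fun (p : C(I, I) × ℝ) (s : ℝ) =>
      extR p.1 (i * p.2 + s * p.2)) (continuous_win_aux i)
  have h2 : Continuous fun p : C(I, I) × ℝ => winInf p.1 (i * p.2) p.2 :=
    isCompact_Icc.continuous_sInf (f := fun (p : C(I, I) × ℝ) (s : ℝ) =>
      extR p.1 (i * p.2 + s * p.2)) (continuous_win_aux i)
  split_ifs <;> fun_prop

lemma le_winSup (f : C(I, I)) {c τ y : ℝ} (hτ : 0 < τ) (h : |y - c| ≤ 3 * τ) :
    extR f y ≤ winSup f c τ := by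
  apply le_csSup
  · exact ⟨1, by rintro _ ⟨s, -, rfl⟩; exact extR_le_one _ _⟩
  · rw [abs_le] at h
    refine ⟨(y - c) / τ, ⟨?_, ?_⟩, ?_⟩
    · rw [le_div_iff₀ hτ]; linarith
    · rw [div_le_iff₀ hτ]; linarith
    · simp [div_mul_cancel₀ _ hτ.ne']

lemma winInf_le (f : C(I, I)) {c τ y : ℝ} (hτ : 0 < τ) (h : |y - c| ≤ 3 * τ) :
    winInf f c τ ≤ extR f y := by
  apply csInf_le
  · exact ⟨0, by rintro _ ⟨s, -, rfl⟩; exact extR_nonneg _ _⟩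
  · rw [abs_le] at h
    refine ⟨(y - c) / τ, ⟨?_, ?_⟩, ?_⟩
    · rw [le_div_iff₀ hτ]; linarith
    · rw [div_le_iff₀ hτ]; linarith
    · simp [div_mul_cancel₀ _ hτ.ne']

lemma node_even (f : C(I, I)) {τ y : ℝ} {i : ℕ} (hτ : 0 < τ) (hi : Even i)
    (h : |y - i * τ| ≤ 3 * τ) : node f τ i ≤ max 0 (extR f y - 4 * τ) := by
  rw [node, if_pos hi]
  exact max_le_max le_rfl (sub_le_sub_right (winInf_le f hτ h) _)

lemma node_odd (f : C(I, I)) {τ y : ℝ} {i : ℕ} (hτ : 0 < τ) (hi : ¬ Even i)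
    (h : |y - i * τ| ≤ 3 * τ) : min 1 (extR f y + 4 * τ) ≤ node f τ i := by
  rw [node, if_neg hi]
  exact min_le_min le_rfl (add_le_add_left (le_winSup f hτ h) _)

lemma node_mem (f : C(I, I)) {τ : ℝ} (hτ : 0 < τ) (i : ℕ) : node f τ i ∈ Icc (0 : ℝ) 1 := by
  have h0 : |(i * τ : ℝ) - i * τ| ≤ 3 * τ := by simp; positivity
  have := extR_nonneg f (i * τ)
  have := extR_le_one f (i * τ)
  by_cases hi : Even i
  · refine ⟨?_, (node_even f hτ hi h0).trans (max_le zero_le_one (by linarith))⟩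
    rw [node, if_pos hi]; exact le_max_left _ _
  · refine ⟨le_trans (le_min zero_le_one (by linarith)) (node_odd f hτ hi h0), ?_⟩
    rw [node, if_neg hi]; exact min_le_left _ _

/-- Consecutive nodes sandwich the `4τ`-neighbourhood of every nearby value of `f`. -/
lemma node_cover (f : C(I, I)) {τ y z : ℝ} {i : ℕ} (hτ : 0 < τ)
    (h : |y - i * τ| ≤ 3 * τ) (h' : |y - (i + 1 : ℕ) * τ| ≤ 3 * τ)
    (hz : z ∈ Icc (0 : ℝ) 1) (hzy : |z - extR f y| ≤ 4 * τ) :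
    z ∈ uIcc (node f τ i) (node f τ (i + 1)) := by
  rw [abs_le] at hzy
  have l : max 0 (extR f y - 4 * τ) ≤ z := max_le hz.1 (by linarith)
  have u : z ≤ min 1 (extR f y + 4 * τ) := le_min hz.2 (by linarith)
  rw [mem_uIcc]
  by_cases hi : Even i
  · exact Or.inl ⟨(node_even f hτ hi h).trans l,
      u.trans (node_odd f hτ (by simpa [Nat.even_add_one] using hi) h')⟩
  · exact Or.inr ⟨(node_even f hτ (by simpa [Nat.even_add_one] using hi) h').trans l,
      u.trans (node_odd f hτ hi h)⟩

lemma node_gap (f : C(I, I)) {τ : ℝ} (hτ : 0 < τ) (hτ4 : τ ≤ 1 / 4) (i : ℕ) :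
    4 * τ ≤ |node f τ (i + 1) - node f τ i| := by
  have h : |(i * τ : ℝ) - i * τ| ≤ 3 * τ := by simp; positivity
  have h' : |(i * τ : ℝ) - (i + 1 : ℕ) * τ| ≤ 3 * τ := by
    push_cast; rw [abs_le]; constructor <;> linarith
  have e0 := extR_nonneg f (i * τ)
  have e1 := extR_le_one f (i * τ)
  -- near any value of `f` there is a subinterval of `[0,1]` of length `4τ ≤ 1`
  have key : ∃ z ∈ Icc (0 : ℝ) 1, z + 4 * τ ∈ Icc (0 : ℝ) 1 ∧ |z - extR f (i * τ)| ≤ 4 * τ ∧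
      |z + 4 * τ - extR f (i * τ)| ≤ 4 * τ := by
    rcases le_total (extR f (i * τ)) (1 - 4 * τ) with hc | hc
    · exact ⟨extR f (i * τ), ⟨e0, e1⟩, ⟨by linarith, by linarith⟩, by simp; positivity,
        by rw [abs_le]; constructor <;> linarith⟩
    · exact ⟨1 - 4 * τ, ⟨by linarith, by linarith⟩, ⟨by linarith, by linarith⟩,
        by rw [abs_le]; constructor <;> linarith, by rw [abs_le]; constructor <;> linarith⟩
  obtain ⟨z, hz, hz', a, a'⟩ := key
  have := abs_sub_le_of_uIcc_subset_uIcc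
    (uIcc_subset_uIcc (node_cover f hτ h h' hz a) (node_cover f hτ h h' hz' a'))
  simpa [abs_of_pos hτ] using this

lemma zig_eq_sum (f : C(I, I)) {τ x : ℝ} {N : ℕ} (hN : x / τ + 1 ≤ N) :
    zig f τ x = ∑ i ∈ Finset.range N, node f τ i * max 0 (1 - |x / τ - i|) := by
  apply finsum_eq_sum_of_support_subset
  intro i hi
  contrapose! hi
  have : (N : ℝ) ≤ i := by exact_mod_cast (by simpa using hi)
  rw [Function.mem_support, not_not, max_eq_left, mul_zero]
  have := neg_abs_le (x / τ - i)
  linarith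

lemma zig_eq (f : C(I, I)) {τ x : ℝ} (hτ : 0 < τ) {i : ℕ} (h1 : i * τ ≤ x)
    (h2 : x ≤ (i + 1) * τ) :
    zig f τ x = node f τ i + (x / τ - i) * (node f τ (i + 1) - node f τ i) := by
  have a1 : (i : ℝ) ≤ x / τ := by rwa [le_div_iff₀ hτ]
  have a2 : x / τ ≤ i + 1 := by rwa [div_le_iff₀ hτ]
  have : zig f τ x = ∑ j ∈ {i, i + 1}, node f τ j * max 0 (1 - |x / τ - j|) := by
    apply finsum_eq_sum_of_support_subset
    intro j hj
    contrapose! hj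
    rw [Function.mem_support, not_not, max_eq_left, mul_zero]
    have hj' : j < i ∨ i + 2 ≤ j := by
      simp at hj; omega
    rcases hj' with hj | hj
    · have : (j : ℝ) + 1 ≤ i := by exact_mod_cast hj
      have := le_abs_self (x / τ - j)
      linarith
    · have : (i : ℝ) + 2 ≤ j := by exact_mod_cast hj
      have := neg_abs_le (x / τ - j)
      linarith
  rw [this, Finset.sum_pair (by simp), abs_of_nonneg (by linarith),
    abs_of_nonpos (by push_cast; linarith), max_eq_right (by linarith),
    max_eq_right (by push_cast; linarith)]
  push_cast; ring

lemma zig_node (f : C(I, I)) {τ : ℝ} (hτ : 0 < τ) (i : ℕ) :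
    zig f τ (i * τ) = node f τ i := by
  rw [zig_eq f hτ (i := i) le_rfl (by nlinarith), mul_div_cancel_right₀ _ hτ.ne']; ring

lemma exists_node (x τ : ℝ) (hτ : 0 < τ) (hx : 0 ≤ x) :
    ∃ i : ℕ, i * τ ≤ x ∧ x < (i + 1) * τ := by
  refine ⟨⌊x / τ⌋₊, ?_, ?_⟩
  · rw [← le_div_iff₀ hτ]; exact Nat.floor_le (by positivity)
  · rw [← div_lt_iff₀ hτ]; exact Nat.lt_floor_add_one _

/-- An interval containing the node values around `x` contains `zig f τ x`. -/
lemma zig_mem (f : C(I, I)) {τ x a b : ℝ} (hτ : 0 < τ) (hx : 0 ≤ x)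
    (h : ∀ i : ℕ, |(i * τ : ℝ) - x| ≤ τ → node f τ i ∈ Icc a b) : zig f τ x ∈ Icc a b := by
  obtain ⟨i, h1, h2⟩ := exists_node x τ hτ hx
  have n1 := h i (by rw [abs_le]; constructor <;> linarith)
  have n2 := h (i + 1) (by push_cast; rw [abs_le]; constructor <;> linarith)
  have a1 : (i : ℝ) ≤ x / τ := by rwa [le_div_iff₀ hτ]
  have a2 : x / τ ≤ i + 1 := by rw [div_le_iff₀ hτ]; exact h2.le
  rw [zig_eq f hτ h1 h2.le]
  have := convex_Icc a b n1 n2 (a := 1 - (x / τ - i)) (b := x / τ - i)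
    (by linarith) (by linarith) (by ring)
  convert this using 1
  simp only [smul_eq_mul]; ring

/-! ### The homotopy -/

/-- The homotopy as a real function: `f` at time `0`, the zigzag of mesh `t / 4` at time `t > 0`. -/
noncomputable def homR (f : C(I, I)) (t x : I) : ℝ :=
  if (t : ℝ) = 0 then f x else zig f (t / 4) x

lemma homR_mem (f : C(I, I)) (t x : I) : homR f t x ∈ Icc (0 : ℝ) 1 := by
  unfold homR
  split_ifs with h
  · exact (f x).2
  · have : 0 < (t : ℝ) / 4 := by
      have := lt_of_le_of_ne t.2.1 (Ne.symm h); positivity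
    exact zig_mem f this x.2.1 fun i _ => node_mem f this i

lemma continuousAt_homR_pos (p : (C(I, I) × I) × I) (h : (p.1.2 : ℝ) ≠ 0) :
    ContinuousAt (fun p : (C(I, I) × I) × I => homR p.1.1 p.1.2 p.2) p := by
  have hpos : 0 < (p.1.2 : ℝ) := lt_of_le_of_ne p.1.2.2.1 (Ne.symm h)
  have hc : ContinuousAt (fun q : (C(I, I) × I) × I => (q.2 : ℝ) / (q.1.2 / 4) + 1) p := by
    apply ContinuousAt.add _ continuousAt_const
    apply ContinuousAt.div (by fun_prop) (by fun_prop)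
    positivity
  obtain ⟨N, hN⟩ := exists_nat_gt ((p.2 : ℝ) / (p.1.2 / 4) + 1)
  have ev : ∀ᶠ q : (C(I, I) × I) × I in 𝓝 p, 0 < (q.1.2 : ℝ) :=
    (by fun_prop : Continuous fun q : (C(I, I) × I) × I => (q.1.2 : ℝ)).continuousAt.eventually
      (lt_mem_nhds hpos)
  have key : ContinuousAt (fun q : (C(I, I) × I) × I => ∑ i ∈ Finset.range N,
      node q.1.1 (q.1.2 / 4) i * max 0 (1 - |(q.2 : ℝ) / (q.1.2 / 4) - i|)) p := by
    apply tendsto_finsetSum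
    intro i _
    apply ContinuousAt.mul
    · exact ((continuous_node i).comp (by fun_prop : Continuous
        fun q : (C(I, I) × I) × I => (q.1.1, (q.1.2 : ℝ) / 4))).continuousAt
    · have : ContinuousAt (fun q : (C(I, I) × I) × I => (q.2 : ℝ) / (q.1.2 / 4)) p :=
        ContinuousAt.div (by fun_prop) (by fun_prop) (by positivity)
      fun_prop
  refine key.congr ?_
  filter_upwards [ev, hc.eventually (gt_mem_nhds hN)] with q hq hqN
  rw [homR, if_neg hq.ne', zig_eq_sum _ hqN.le]

/-- Every zigzag value is close to values of `f` at nearby points; this gives continuity at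
time `0`. -/
lemma zig_near (f : C(I, I)) {τ x a b : ℝ} (hτ : 0 < τ) (hx : 0 ≤ x)
    (h : ∀ y : ℝ, |y - x| ≤ 4 * τ → extR f y ∈ Icc a b) :
    zig f τ x ∈ Icc (a - 4 * τ) (b + 4 * τ) := by
  apply zig_mem f hτ hx
  intro i hi
  have hmem : ∀ s ∈ Icc (-3 : ℝ) 3, extR f (i * τ + s * τ) ∈ Icc a b := by
    intro s hs
    apply h
    rw [abs_le] at hi ⊢
    constructor <;> nlinarith [hs.1, hs.2]
  have hne : ((fun s : ℝ => extR f (i * τ + s * τ)) '' Icc (-3) 3).Nonempty :=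
    (nonempty_Icc.2 (by norm_num)).image _
  have e0 := extR_nonneg f (i * τ)
  have e1 := extR_le_one f (i * τ)
  have e2 := hmem 0 (by norm_num)
  rw [zero_mul, add_zero] at e2
  have h0 : |(i * τ : ℝ) - i * τ| ≤ 3 * τ := by simp; positivity
  by_cases hpar : Even i
  · have : a ≤ winInf f (i * τ) τ :=
      le_csInf hne (by rintro _ ⟨s, hs, rfl⟩; exact (hmem s hs).1)
    refine ⟨?_, (node_even f hτ hpar h0).trans (max_le ?_ ?_)⟩
    · rw [node, if_pos hpar]; exact le_trans (by linarith) (le_max_right _ _)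
    · linarith [e2.2]
    · linarith [e2.2]
  · have : winSup f (i * τ) τ ≤ b :=
      csSup_le hne (by rintro _ ⟨s, hs, rfl⟩; exact (hmem s hs).2)
    refine ⟨le_trans (le_min ?_ ?_) (node_odd f hτ hpar h0), ?_⟩
    · linarith [e2.1]
    · linarith [e2.1]
    · rw [node, if_neg hpar]; exact le_trans (min_le_right _ _) (by linarith)

lemma continuousAt_homR_zero (p : (C(I, I) × I) × I) (h : (p.1.2 : ℝ) = 0) :
    ContinuousAt (fun p : (C(I, I) × I) × I => homR p.1.1 p.1.2 p.2) p := by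
  obtain ⟨⟨f₀, t₀⟩, x₀⟩ := p
  simp only at h
  rw [Metric.continuousAt_iff']
  intro ε hε
  have hval : homR f₀ t₀ x₀ = f₀ x₀ := by rw [homR, if_pos h]
  -- joint continuity of evaluation, at a neighbourhood of `f₀` and an `η`-ball around `x₀`
  have hev : ∀ᶠ q : C(I, I) × ℝ in 𝓝 f₀ ×ˢ 𝓝 (x₀ : ℝ), dist (extR q.1 q.2) (f₀ x₀) < ε / 2 := by
    rw [← nhds_prod_eq]
    have := (Metric.continuousAt_iff'.1 (continuous_extR.continuousAt (x := (f₀, (x₀ : ℝ)))))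
      (ε / 2) (by positivity)
    simpa only [extR_coe] using this
  obtain ⟨P, hP, Q, hQ, hPQ⟩ := eventually_prod_iff.1 hev
  obtain ⟨η, hη, hball⟩ := Metric.eventually_nhds_iff.1 hQ
  have c1 : Tendsto (fun q : (C(I, I) × I) × I => q.1.1) (𝓝 ((f₀, t₀), x₀)) (𝓝 f₀) :=
    (by fun_prop : Continuous fun q : (C(I, I) × I) × I => q.1.1).tendsto _
  have c2 : Tendsto (fun q : (C(I, I) × I) × I => (q.1.2 : ℝ)) (𝓝 ((f₀, t₀), x₀)) (𝓝 0) := by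
    rw [← h]
    exact (by fun_prop : Continuous fun q : (C(I, I) × I) × I => (q.1.2 : ℝ)).tendsto _
  have c3 : Tendsto (fun q : (C(I, I) × I) × I => (q.2 : ℝ)) (𝓝 ((f₀, t₀), x₀))
      (𝓝 (x₀ : ℝ)) :=
    (by fun_prop : Continuous fun q : (C(I, I) × I) × I => (q.2 : ℝ)).tendsto _
  filter_upwards [c1.eventually hP, c2.eventually (gt_mem_nhds (half_pos hη)),
    c2.eventually (gt_mem_nhds (half_pos hε)),
    c3.eventually (Metric.ball_mem_nhds _ (half_pos hη))] with q q1 q2 q3 q4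
  rw [hval]
  have near : ∀ y : ℝ, |y - q.2| ≤ q.1.2 → |extR q.1.1 y - f₀ x₀| < ε / 2 := by
    intro y hy
    refine hPQ q1 (hball ?_)
    rw [Real.dist_eq] at q4
    rw [Real.dist_eq]
    have := abs_sub_le y q.2 x₀
    linarith
  rw [Real.dist_eq, homR]
  split_ifs with hq
  · have := near q.2 (by simp [hq])
    rw [extR_coe] at this
    linarith
  · have hpos : 0 < (q.1.2 : ℝ) / 4 := by
      have := lt_of_le_of_ne q.1.2.2.1 (Ne.symm hq); positivity
    have := zig_near q.1.1 (a := f₀ x₀ - ε / 2) (b := f₀ x₀ + ε / 2) hpos q.2.2.1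
      (fun y hy => by
        have := near y (by linarith)
        rw [abs_lt] at this
        constructor <;> linarith)
    rw [abs_lt]
    constructor <;> linarith [this.1, this.2]

lemma continuous_homR : Continuous fun p : (C(I, I) × I) × I => homR p.1.1 p.1.2 p.2 :=
  continuous_iff_continuousAt.2 fun p => by
    by_cases h : (p.1.2 : ℝ) = 0
    · exact continuousAt_homR_zero p h
    · exact continuousAt_homR_pos p h

/-- The homotopy as a continuous map into `C(I, I)`, obtained by currying. -/
noncomputable def hom : C(C(I, I) × I, C(I, I)) :=
  ContinuousMap.curry ⟨fun p => ⟨homR p.1.1 p.1.2 p.2, homR_mem _ _ _⟩,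
    continuous_homR.subtype_mk _⟩

lemma hom_zero (f : C(I, I)) : hom (f, 0) = f := by
  ext x
  simp [hom, homR]

lemma hom_pos (f : C(I, I)) {t : I} (ht : 0 < (t : ℝ)) (x : I) :
    (hom (f, t) x : ℝ) = zig f (t / 4) x := by
  exact if_neg ht.ne'

/-! ### Piecewise linearity -/

lemma isPiecewiseLinearMap_of_zig {f g : C(I, I)} {τ : ℝ} (hτ : 0 < τ)
    (hg : ∀ x : I, (g x : ℝ) = zig f τ x) : IsPiecewiseLinearMap g := by
  have hK : 1 ≤ (⌈1 / τ⌉₊ : ℝ) * τ := by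
    rw [← div_le_iff₀ hτ]; exact Nat.le_ceil _
  have hlt : ∀ j : ℕ, j < ⌈1 / τ⌉₊ → j * τ < 1 := fun j hj => by
    rw [← lt_div_iff₀ hτ]; exact Nat.lt_ceil.1 hj
  refine ⟨⌈1 / τ⌉₊, fun j => ⟨min (j * τ) 1, le_min (by positivity) zero_le_one,
    min_le_right _ _⟩, ?_, ?_, ?_, ?_⟩
  · intro i j hij
    have hij' : (i : ℕ) < j := hij
    have h1 := hlt i (by omega)
    have h2 : ((i : ℕ) : ℝ) * τ < (j : ℕ) * τ :=
      mul_lt_mul_of_pos_right (by exact_mod_cast hij') hτ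
    have : min (((i : ℕ) : ℝ) * τ) 1 < min (((j : ℕ) : ℝ) * τ) 1 := by
      rw [min_eq_left h1.le]
      exact lt_min h2 h1
    exact this
  · simp
  · apply Subtype.ext
    simpa using hK
  · intro i
    refine ⟨(node f τ (i + 1) - node f τ i) / τ,
      node f τ i - i * (node f τ (i + 1) - node f τ i), fun y hy => ?_⟩
    have hy1 : min ((i : ℕ) * τ) 1 ≤ (y : ℝ) := hy.1
    have hy2 : (y : ℝ) ≤ min (((i : ℕ) + 1 : ℕ) * τ) 1 := hy.2
    rw [min_eq_left (hlt i i.2).le] at hy1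
    rw [hg, zig_eq f hτ hy1 (by exact_mod_cast hy2.trans (min_le_left _ _))]
    ring

/-! ### Transitivity -/

/-- The intermediate value theorem, for maps of `I` and endpoints in either order. -/
lemma ivt (g : C(I, I)) {a b : I} {z : ℝ} (hab : a ≤ b)
    (hz : z ∈ uIcc (g a : ℝ) (g b)) : ∃ x ∈ Icc a b, (g x : ℝ) = z := by
  have hc : ContinuousOn (fun x => (g x : ℝ)) (Icc a b) := by fun_prop
  have hp : IsPreconnected (Icc a b) := isPreconnected_Icc
  rw [mem_uIcc] at hz
  rcases hz with hz | hz
  · exact hp.intermediate_value (left_mem_Icc.2 hab) (right_mem_Icc.2 hab) hc hz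
  · exact hp.intermediate_value (right_mem_Icc.2 hab) (left_mem_Icc.2 hab) hc hz

/-- The `i`-th lap `[iτ, (i+1)τ]`, as a subset of `I`. -/
def lap (τ : ℝ) (i : ℕ) : Set I := {x | i * τ ≤ (x : ℝ) ∧ (x : ℝ) ≤ (i + 1) * τ}

/-- Within distance `3τ` of every point there is a lap contained in `I`. -/
lemma exists_lap_near {τ : ℝ} (hτ : 0 < τ) (hτ4 : τ ≤ 1 / 4) (y : I) :
    ∃ i : ℕ, (i + 1) * τ ≤ 1 ∧ |(y : ℝ) - i * τ| ≤ 3 * τ ∧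
      |(y : ℝ) - (i + 1 : ℕ) * τ| ≤ 3 * τ := by
  obtain ⟨i, h1, h2⟩ := exists_node y τ hτ y.2.1
  have hy := y.2.2
  by_cases h : (i + 1) * τ ≤ 1
  · refine ⟨i, h, ?_, ?_⟩ <;> push_cast <;> rw [abs_le] <;> constructor <;> linarith
  · push Not at h
    cases i with
    | zero => norm_num at h; linarith
    | succ i =>
      push_cast at h h1 h2
      refine ⟨i, by linarith, ?_, ?_⟩ <;> push_cast <;> rw [abs_le] <;> constructor <;> linarith

section Transitive

variable {f g : C(I, I)} {τ : ℝ}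

/-- The image of a lap near `y` contains the `4τ`-neighbourhood of `f y`. -/
lemma lap_cover (hτ : 0 < τ) (hg : ∀ x : I, (g x : ℝ) = zig f τ x) {i : ℕ}
    (hi : (i + 1) * τ ≤ 1) {y : I} (h : |(y : ℝ) - i * τ| ≤ 3 * τ)
    (h' : |(y : ℝ) - (i + 1 : ℕ) * τ| ≤ 3 * τ) {z : I} (hz : |(z : ℝ) - f y| ≤ 4 * τ) :
    z ∈ g '' lap τ i := by
  have i0 : 0 ≤ (i : ℝ) * τ := by positivity
  let a : I := ⟨i * τ, i0, by linarith⟩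
  let b : I := ⟨(i + 1 : ℕ) * τ, by positivity, by exact_mod_cast hi⟩
  have hab : a ≤ b := by
    rw [← Subtype.coe_le_coe]; simp only [a, b]; push_cast; linarith
  rw [← extR_coe] at hz
  have hmem := node_cover f hτ h h' z.2 hz
  have ha : (g a : ℝ) = node f τ i := by rw [hg]; exact zig_node f hτ i
  have hb : (g b : ℝ) = node f τ (i + 1) := by rw [hg]; exact zig_node f hτ (i + 1)
  rw [← ha, ← hb] at hmem
  obtain ⟨x, hx, hxz⟩ := ivt g hab hmem
  refine ⟨x, ⟨hx.1, ?_⟩, Subtype.ext hxz⟩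
  have : (x : ℝ) ≤ (i + 1 : ℕ) * τ := hx.2
  exact_mod_cast this

/-- The iterated images of a lap under `g` contain, with a margin of `3τ`, its iterated images under
any map `h` that is `τ`-close to `f`. -/
lemma shadow {h : C(I, I)} (hτ : 0 < τ) (hτ4 : τ ≤ 1 / 4) (hg : ∀ x : I, (g x : ℝ) = zig f τ x)
    (hfh : ∀ y : I, |(f y : ℝ) - h y| ≤ τ) {i : ℕ} (hi : (i + 1) * τ ≤ 1) {x : I}
    (hx : x ∈ lap τ i) (n : ℕ) :
    ∀ z : I, |(z : ℝ) - (h^[n + 1] x : I)| ≤ 3 * τ → z ∈ g^[n + 1] '' lap τ i := by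
  induction n with
  | zero =>
    intro z hz
    obtain ⟨hx1, hx2⟩ := hx
    refine lap_cover hτ hg hi (y := x) ?_ ?_ ?_
    · rw [abs_le]; constructor <;> linarith
    · push_cast; rw [abs_le]; constructor <;> linarith
    · have := abs_sub_le (z : ℝ) (h x) (f x)
      have h2 := hfh x
      rw [abs_sub_comm] at h2
      change |(z : ℝ) - h x| ≤ 3 * τ at hz
      linarith
  | succ n ih =>
    intro z hz
    rw [Function.iterate_succ_apply'] at hz
    generalize h^[n + 1] x = y at hz ih
    obtain ⟨j, hj, j1, j2⟩ := exists_lap_near hτ hτ4 y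
    have hzj : z ∈ g '' lap τ j := by
      refine lap_cover hτ hg hj j1 j2 ?_
      have := abs_sub_le (z : ℝ) (h y) (f y)
      have h2 := hfh y
      rw [abs_sub_comm] at h2
      linarith
    obtain ⟨w, hw, rfl⟩ := hzj
    obtain ⟨v, hv, hvw⟩ := ih w (by
      obtain ⟨w1, w2⟩ := hw
      push_cast at j2
      rw [abs_le] at *
      constructor <;> linarith)
    exact ⟨v, hv, by rw [Function.iterate_succ_apply', hvw]⟩

/-- On each side of a node the zigzag expands distances by a factor at least `4`. -/
lemma zig_expand (hτ : 0 < τ) (hτ4 : τ ≤ 1 / 4) {i : ℕ} {x y : ℝ} (hx : i * τ ≤ x) (hxy : x ≤ y)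
    (hy : y ≤ (i + 1) * τ) : 4 * (y - x) ≤ |zig f τ y - zig f τ x| := by
  rw [zig_eq f hτ hx (hxy.trans hy), zig_eq f hτ (hx.trans hxy) hy]
  have e : node f τ i + (y / τ - i) * (node f τ (i + 1) - node f τ i) -
      (node f τ i + (x / τ - i) * (node f τ (i + 1) - node f τ i)) =
      ((y - x) / τ) * (node f τ (i + 1) - node f τ i) := by ring
  have hq : 0 ≤ (y - x) / τ := div_nonneg (by linarith) hτ.le
  rw [e, abs_mul, abs_of_nonneg hq]
  calc 4 * (y - x) = (y - x) / τ * (4 * τ) := by field_simp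
    _ ≤ _ := mul_le_mul_of_nonneg_left (node_gap f hτ hτ4 i) hq

lemma doubling (hτ : 0 < τ) (hτ4 : τ ≤ 1 / 4) (hg : ∀ x : I, (g x : ℝ) = zig f τ x) {a b : I}
    (hab : a < b) (hno : ∀ i : ℕ, (i + 1) * τ ≤ 1 → ¬ lap τ i ⊆ Icc a b) :
    ∃ a' b' : I, a' < b' ∧ 2 * ((b : ℝ) - a) ≤ b' - a' ∧ Icc a' b' ⊆ g '' Icc a b := by
  have hab' : (a : ℝ) < b := hab
  -- a subinterval of at least half the length, without interior nodes
  have key : ∃ (i : ℕ) (c d : I), a ≤ c ∧ d ≤ b ∧ i * τ ≤ (c : ℝ) ∧ (d : ℝ) ≤ (i + 1) * τ ∧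
      ((b : ℝ) - a) / 2 ≤ d - c := by
    obtain ⟨i, h1, h2⟩ := exists_node a τ hτ a.2.1
    have hb := b.2.2
    by_cases hp : (b : ℝ) ≤ (i + 1) * τ
    · exact ⟨i, a, b, le_rfl, le_rfl, h1, hp, by linarith⟩
    · push Not at hp
      let p : I := ⟨(i + 1) * τ, by positivity, by linarith⟩
      have hpa : a ≤ p := h2.le
      have hpb : p ≤ b := hp.le
      have hpv : (p : ℝ) = (i + 1) * τ := rfl
      have hnext : (b : ℝ) ≤ ((i + 1 : ℕ) + 1) * τ := by
        by_contra hcon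
        push Not at hcon
        refine hno (i + 1) (by linarith) fun x hx => ?_
        obtain ⟨x1, x2⟩ := hx
        push_cast at x1
        exact ⟨by rw [← Subtype.coe_le_coe]; linarith, by rw [← Subtype.coe_le_coe]; linarith⟩
      rcases le_total (((b : ℝ) - a) / 2) (p - a) with hh | hh
      · exact ⟨i, a, p, le_rfl, hpb, h1, hpv.le, hh⟩
      · exact ⟨i + 1, p, b, hpa, le_rfl, by push_cast; exact hpv.ge, hnext, by linarith⟩
  obtain ⟨i, c, d, hac, hdb, hc, hd, hlen⟩ := key
  have hcd : c ≤ d := by rw [← Subtype.coe_le_coe]; linarith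
  have hexp := zig_expand (f := f) hτ hτ4 hc hcd hd
  rw [← hg, ← hg] at hexp
  have himg : ∀ z : I, (z : ℝ) ∈ uIcc (g c : ℝ) (g d) → z ∈ g '' Icc a b := fun z hz => by
    obtain ⟨x, hx, hxz⟩ := ivt g hcd hz
    exact ⟨x, ⟨hac.trans hx.1, hx.2.trans hdb⟩, Subtype.ext hxz⟩
  rcases le_total (g c : ℝ) (g d) with hle | hle
  · rw [abs_of_nonneg (by linarith)] at hexp
    exact ⟨g c, g d, by rw [← Subtype.coe_lt_coe]; linarith, by linarith,
      fun z hz => himg z (mem_uIcc.2 (Or.inl hz))⟩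
  · rw [abs_of_nonpos (by linarith)] at hexp
    exact ⟨g d, g c, by rw [← Subtype.coe_lt_coe]; linarith, by linarith,
      fun z hz => himg z (mem_uIcc.2 (Or.inr hz))⟩

/-- Some iterate of every nondegenerate interval contains a lap, since lengths in `I` cannot
double forever. -/
lemma exists_lap (hτ : 0 < τ) (hτ4 : τ ≤ 1 / 4) (hg : ∀ x : I, (g x : ℝ) = zig f τ x) {a b : I}
    (hab : a < b) : ∃ (m i : ℕ), (i + 1) * τ ≤ 1 ∧ lap τ i ⊆ g^[m] '' Icc a b := by
  by_contra! hcon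
  have grow : ∀ m : ℕ, ∃ a' b' : I, a' < b' ∧ 2 ^ m * ((b : ℝ) - a) ≤ b' - a' ∧
      Icc a' b' ⊆ g^[m] '' Icc a b := by
    intro m
    induction m with
    | zero => exact ⟨a, b, hab, by simp, by simp⟩
    | succ m ih =>
      obtain ⟨a', b', h1, h2, h3⟩ := ih
      obtain ⟨a'', b'', k1, k2, k3⟩ := doubling hτ hτ4 hg h1
        fun i hi hl => hcon m i hi (hl.trans h3)
      refine ⟨a'', b'', k1, by rw [pow_succ]; linarith, k3.trans ?_⟩
      rw [Function.iterate_succ', image_comp]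
      exact image_mono h3
  have hpos : 0 < (b : ℝ) - a := sub_pos.2 hab
  obtain ⟨m, hm⟩ := pow_unbounded_of_one_lt (1 / ((b : ℝ) - a)) (one_lt_two (α := ℝ))
  obtain ⟨a', b', -, h2, -⟩ := grow m
  rw [div_lt_iff₀ hpos] at hm
  linarith [a'.2.1, b'.2.2]

lemma isTransitiveMap_of_zig (hτ : 0 < τ) (hτ4 : τ ≤ 1 / 4)
    (hg : ∀ x : I, (g x : ℝ) = zig f τ x) (hf : f ∈ closure TransSet) : IsTransitiveMap g := by
  intro U V hU hV hUne hVne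
  obtain ⟨h, hh, hdist⟩ := Metric.mem_closure_iff.1 hf τ hτ
  have hfh : ∀ y : I, |(f y : ℝ) - h y| ≤ τ := fun y =>
    (ContinuousMap.dist_apply_le_dist y).trans hdist.le
  obtain ⟨a₀, b₀, hab₀, habU₀⟩ := hU.exists_Ioo_subset hUne
  obtain ⟨a, ha, hab₁⟩ := exists_between hab₀
  obtain ⟨b, hab, hb⟩ := exists_between hab₁
  have habU : Icc a b ⊆ U := fun x hx => habU₀ ⟨ha.trans_le hx.1, hx.2.trans_lt hb⟩
  obtain ⟨m, i, hi, hlap⟩ := exists_lap hτ hτ4 hg hab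
  obtain ⟨n, hn, x, hx, hxV⟩ := hh {x : I | i * τ < (x : ℝ) ∧ (x : ℝ) < (i + 1) * τ} V
    ((isOpen_lt continuous_const continuous_subtype_val).inter
      (isOpen_lt continuous_subtype_val continuous_const)) hV
    ⟨⟨(i + 1 / 2) * τ, by positivity, by linarith⟩, by
      constructor <;> simp only <;> linarith⟩ hVne
  obtain ⟨n, rfl⟩ := Nat.exists_eq_succ_of_ne_zero hn.ne'
  obtain ⟨v, hv, hvx⟩ := shadow hτ hτ4 hg hfh hi (x := x) ⟨hx.1.le, hx.2.le⟩ n (h^[n + 1] x)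
    (by simp; positivity)
  obtain ⟨u, hu, rfl⟩ := hlap hv
  refine ⟨n + 1 + m, by omega, u, habU hu, ?_⟩
  rw [mem_preimage, Function.iterate_add_apply, hvx]
  exact hxV

end Transitive

theorem transPLSet_homotopy_dense_in_closure_transSet :
    ∃ H : ↥(closure TransSet) × I → ↥(closure TransSet),
      Continuous H ∧
      (∀ f : ↥(closure TransSet), H (f, 0) = f) ∧
      (∀ (f : ↥(closure TransSet)) (t : I), 0 < (t : ℝ) →
        ((H (f, t) : C(I, I)) ∈ TransPLSet)) := by
  have hPL : ∀ (f : ↥(closure TransSet)) (t : I), 0 < (t : ℝ) →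
      hom (f.1, t) ∈ TransPLSet := fun f t ht => by
    have hτ : 0 < (t : ℝ) / 4 := by positivity
    exact ⟨isTransitiveMap_of_zig hτ (by linarith [t.2.2]) (hom_pos f.1 ht) f.2,
      isPiecewiseLinearMap_of_zig hτ (hom_pos f.1 ht)⟩
  have hmem : ∀ p : ↥(closure TransSet) × I, hom (p.1.1, p.2) ∈ closure TransSet := fun p => by
    rcases eq_or_lt_of_le p.2.2.1 with h | h
    · rw [show p.2 = 0 from Subtype.ext h.symm, hom_zero]; exact p.1.2
    · exact subset_closure (hPL p.1 p.2 h).1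
  refine ⟨fun p => ⟨hom (p.1.1, p.2), hmem p⟩, ?_, fun f => Subtype.ext (hom_zero _), hPL⟩
  exact (hom.continuous.comp (by fun_prop)).subtype_mk _
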